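/- arXiv:1905.03579 — 3 statements merged into one kernel-verified Lean document; each statement's English description precedes it below -/
import Mathlib

section
/- Let 𝔄 and 𝔅 be the increasing events generated by the simple points of two nonempty sets X ⊆ {1,…,N} and Y ⊆ {1,…,N} respectively, i.e. 𝔄 = {A ⊆ {1,…,N} : A ∩ X ≠ ∅} and 𝔅 = {A ⊆ {1,…,N} : A ∩ Y ≠ ∅}. Then the van den Berg–Kesten inequality holds: P(φ ∈ 𝔄∘𝔅) ≤ P(φ ∈ 𝔄) · P(φ ∈ 𝔅), where 𝔄∘𝔅 = {K ⊆ {1,…,N} : ∃ x ∈ X, ∃ y ∈ Y, x ≠ y, x ∈ K and y ∈ K}. -/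
open Matrix

/-- Squared determinant of the submatrix of `Z` formed by the columns indexed by `S`,
when `S` has exactly `q` elements; `0` otherwise. -/
noncomputable def detSq {q N : ℕ} (Z : Matrix (Fin q) (Fin N) ℝ) (S : Finset (Fin N)) : ℝ :=
  if h : S.card = q then
    (Matrix.det (Matrix.of fun i j : Fin q => Z i ((S.orderIsoOfFin h j : Fin N)))) ^ 2
  else 0

open scoped Classical in
/-- `prDP Z E` is the probability that the determinantal process associated to the
matrix `Z` (with orthonormal rows) belongs to the family `E` of subsets of `{1,…,N}`:
`P(φ(Z) ∈ E) = Σ_{|S| = q, S ∈ E} det(Z_S)²`. -/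
noncomputable def prDP {q N : ℕ} (Z : Matrix (Fin q) (Fin N) ℝ)
    (E : Set (Finset (Fin N))) : ℝ :=
  ∑ S : Finset (Fin N), if S ∈ E then detSq Z S else 0

/-!
The probability that the process misses a set `C` is the Gram determinant of the columns of `Z`
outside `C` (Cauchy–Binet). By Fischer's inequality this is log-submodular in `C`. A set `K` fails
to meet `X` and `Y` at two distinct points exactly when it misses `X`, misses `Y`, or meets `X ∪ Y`
in a single point `z ∈ X ∩ Y`. Log-submodularity for the pair `(X ∪ Y) \ {z}`, `{z}` bounds the
probability of the latter event from below, and log-submodularity for the pair `X`, `Y` turns the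
resulting estimate into a product.
-/

section CauchyBinet

open Set.powersetCard

variable {R n : Type*} [CommRing R] [Fintype n] [LinearOrder n] {p : ℕ}

/-- In `⋀ᵖ Rⁿ`, expand the wedge of the rows of `A` in the standard basis and pair it with the
wedge of the columns of `B`, read as linear forms. -/
theorem det_mul_eq_sum_powersetCard (A : Matrix (Fin p) n R) (B : Matrix n (Fin p) R) :
    (A * B).det = ∑ s : Set.powersetCard n p,
      (A.submatrix id (ofFinEmbEquiv.symm s)).det *
        (B.submatrix (ofFinEmbEquiv.symm s) id).det := by
  let wedge := exteriorPower.ιMulti (M := n → R) R p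
  let colB := exteriorPower.pairingDual R (n → R) p
    (exteriorPower.ιMulti R p fun j ↦ LinearMap.proj j ∘ₗ Bᵀ.mulVecLin)
  have colB_wedge (v : Fin p → n → R) : colB (wedge v) = (Matrix.of v * B).det := by
    simp only [colB, wedge, exteriorPower.pairingDual_ιMulti_ιMulti]
    congr 1
    ext i j
    simp [Matrix.mul_apply, vecMul, dotProduct, mul_comm]
  have wedge_expansion : wedge A.row = ∑ s : Set.powersetCard n p,
      (A.submatrix id (ofFinEmbEquiv.symm s)).det •
        wedge (fun i ↦ Pi.basisFun R n (ofFinEmbEquiv.symm s i)) := by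
    rw [← ((Pi.basisFun R n).exteriorPower p).sum_repr (wedge A.row)]
    refine Finset.sum_congr rfl fun s _ ↦ ?_
    rw [exteriorPower.basis_repr_apply, exteriorPower.ιMultiDual_apply_ιMulti,
      exteriorPower.basis_apply]
    rfl
  rw [show (A * B).det = colB (wedge A.row) from (colB_wedge A.row).symm, wedge_expansion, map_sum]
  refine Finset.sum_congr rfl fun s _ ↦ ?_
  rw [map_smul, colB_wedge, smul_eq_mul]
  congr 2
  ext i j
  simp [Matrix.mul_apply, Pi.single_apply]

theorem det_mul_diagonal_mul_eq_sum_powersetCard (A : Matrix (Fin p) n R) (d : n → R)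
    (B : Matrix n (Fin p) R) :
    (A * diagonal d * B).det = ∑ s : Set.powersetCard n p, (∏ i ∈ (s : Finset n), d i) *
      ((A.submatrix id (ofFinEmbEquiv.symm s)).det *
        (B.submatrix (ofFinEmbEquiv.symm s) id).det) := by
  rw [det_mul_eq_sum_powersetCard]
  refine Finset.sum_congr rfl fun s _ ↦ ?_
  have prod_eq : ∏ i ∈ (s : Finset n), d i = ∏ j, d (ofFinEmbEquiv.symm s j) := by
    rw [← Finset.map_orderEmbOfFin_univ (s : Finset n) s.2, Finset.prod_map]
    rfl
  have minor_eq : (A * diagonal d).submatrix id (ofFinEmbEquiv.symm s) =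
      A.submatrix id (ofFinEmbEquiv.symm s) * diagonal (d ∘ ofFinEmbEquiv.symm s) := by
    ext i j
    simp
  rw [minor_eq, det_mul, det_diagonal, prod_eq]
  simp only [Function.comp_apply]
  ring

end CauchyBinet

section PosSemidef

open scoped ComplexOrder

variable {𝕜 m n : Type*} [RCLike 𝕜] [Fintype m] [Fintype n]

open scoped MatrixOrder in
theorem exists_eq_mul_conjTranspose_of_posSemidef {A : Matrix n n 𝕜} (hA : A.PosSemidef) :
    ∃ B : Matrix n n 𝕜, A = B * Bᴴ := by
  classical
  exact CStarAlgebra.nonneg_iff_eq_mul_star_self.mp hA.nonneg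

variable [DecidableEq m] [DecidableEq n]

theorem one_le_det_one_add_of_posSemidef {A : Matrix n n 𝕜} (hA : A.PosSemidef) :
    1 ≤ (1 + A).det := by
  have det_eq : (1 + A).det = ∏ i, (1 + (hA.1.eigenvalues i : 𝕜)) := by
    conv_lhs => rw [hA.1.spectral_theorem, Unitary.conjStarAlgAut_apply, det_one_add_mul_comm]
    rw [← Matrix.mul_assoc, Unitary.coe_star_mul_self, Matrix.one_mul, ← diagonal_one,
      diagonal_add, det_diagonal]
    rfl
  rw [det_eq]
  exact Finset.one_le_prod fun i _ ↦ by simpa using hA.eigenvalues_nonneg i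

theorem det_le_det_add_of_posSemidef {A B : Matrix n n 𝕜} (hA : A.PosSemidef)
    (hB : B.PosSemidef) : A.det ≤ (A + B).det := by
  rcases eq_or_ne A.det 0 with hdet | hdet
  · simpa [hdet] using (hA.add hB).det_nonneg
  obtain ⟨U, rfl⟩ := exists_eq_mul_conjTranspose_of_posSemidef hB
  rw [det_add_mul _ _ hdet.isUnit]
  exact le_mul_of_one_le_right hA.det_nonneg
    (one_le_det_one_add_of_posSemidef (hA.inv.conjTranspose_mul_mul_same U))

/-- **Fischer's inequality**, from monotonicity of the determinant applied to the Schur complement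
of `A`. -/
theorem det_fromBlocks_le_of_posSemidef {A : Matrix m m 𝕜} {B : Matrix m n 𝕜} {D : Matrix n n 𝕜}
    (h : (fromBlocks A B Bᴴ D).PosSemidef) : (fromBlocks A B Bᴴ D).det ≤ A.det * D.det := by
  have hA : A.PosSemidef := h.submatrix Sum.inl
  have hD : D.PosSemidef := h.submatrix Sum.inr
  rcases eq_or_ne (fromBlocks A B Bᴴ D).det 0 with hdet | hdet
  · rw [hdet]
    exact mul_nonneg hA.det_nonneg hD.det_nonneg
  have hA' : A.PosDef := (h.posDef_iff_det_ne_zero.mpr hdet).submatrix Sum.inl_injective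
  let := hA'.isUnit.invertible
  have schur : (D - Bᴴ * A⁻¹ * B).PosSemidef := (PosDef.fromBlocks₁₁ B D hA').mp h
  have det_schur_le : (D - Bᴴ * A⁻¹ * B).det ≤ D.det := by
    simpa using
      det_le_det_add_of_posSemidef schur (hA'.inv.posSemidef.conjTranspose_mul_mul_same B)
  rw [det_fromBlocks₁₁, invOf_eq_nonsing_inv]
  exact mul_le_mul_of_nonneg_left det_schur_le hA.det_nonneg

theorem det_one_add_fromCols_le_of_posSemidef {k : Type*} [Fintype k]
    {A : Matrix k k 𝕜} (hA : A.PosSemidef) (U : Matrix k m 𝕜) (V : Matrix k n 𝕜) :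
    (1 + (fromCols U V)ᴴ * A * fromCols U V).det ≤ (1 + Uᴴ * A * U).det * (1 + Vᴴ * A * V).det := by
  have blocks : 1 + (fromCols U V)ᴴ * A * fromCols U V =
      fromBlocks (1 + Uᴴ * A * U) (Uᴴ * A * V) (Uᴴ * A * V)ᴴ (1 + Vᴴ * A * V) := by
    rw [conjTranspose_fromCols_eq_fromRows_conjTranspose, fromRows_mul, fromRows_mul_fromCols,
      ← fromBlocks_one, fromBlocks_add]
    simp [hA.1.eq, Matrix.mul_assoc]
  have posSemidef : (1 + (fromCols U V)ᴴ * A * fromCols U V).PosSemidef :=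
    PosSemidef.one.add (hA.conjTranspose_mul_mul_same _)
  rw [blocks] at posSemidef ⊢
  exact det_fromBlocks_le_of_posSemidef posSemidef

theorem det_add_add_mul_det_le_of_posSemidef {A P Q : Matrix n n 𝕜} (hA : A.PosSemidef)
    (hP : P.PosSemidef) (hQ : Q.PosSemidef) :
    (A + P + Q).det * A.det ≤ (A + P).det * (A + Q).det := by
  rcases eq_or_ne A.det 0 with hdet | hdet
  · rw [hdet, mul_zero]
    exact mul_nonneg (hA.add hP).det_nonneg (hA.add hQ).det_nonneg
  obtain ⟨U, rfl⟩ := exists_eq_mul_conjTranspose_of_posSemidef hP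
  obtain ⟨V, rfl⟩ := exists_eq_mul_conjTranspose_of_posSemidef hQ
  have add_eq : A + U * Uᴴ + V * Vᴴ = A + fromCols U V * (fromCols U V)ᴴ := by
    rw [conjTranspose_fromCols_eq_fromRows_conjTranspose, fromCols_mul_fromRows, add_assoc]
  calc (A + U * Uᴴ + V * Vᴴ).det * A.det
      = A.det ^ 2 * (1 + (fromCols U V)ᴴ * A⁻¹ * fromCols U V).det := by
        rw [add_eq, det_add_mul _ _ hdet.isUnit]
        ring
    _ ≤ A.det ^ 2 * ((1 + Uᴴ * A⁻¹ * U).det * (1 + Vᴴ * A⁻¹ * V).det) :=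
        mul_le_mul_of_nonneg_left (det_one_add_fromCols_le_of_posSemidef hA.inv U V)
          (pow_nonneg hA.det_nonneg 2)
    _ = (A + U * Uᴴ).det * (A + V * Vᴴ).det := by
        rw [det_add_mul _ _ hdet.isUnit, det_add_mul _ _ hdet.isUnit]
        ring

theorem det_mul_diagonal_sup_mul_det_mul_diagonal_inf_le (Z : Matrix m n ℝ) {d e : n → ℝ}
    (hd : 0 ≤ d) (he : 0 ≤ e) :
    (Z * diagonal (d ⊔ e) * Zᵀ).det * (Z * diagonal (d ⊓ e) * Zᵀ).det ≤
      (Z * diagonal d * Zᵀ).det * (Z * diagonal e * Zᵀ).det := by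
  let gram (c : n → ℝ) : Matrix m m ℝ := Z * diagonal c * Zᵀ
  have gram_add (c c' : n → ℝ) : gram (c + c') = gram c + gram c' := by
    simp only [gram, ← diagonal_add, Matrix.mul_add, Matrix.add_mul, Pi.add_def]
  have gram_posSemidef {c : n → ℝ} (hc : 0 ≤ c) : (gram c).PosSemidef := by
    simpa [gram] using (PosSemidef.diagonal hc).mul_mul_conjTranspose_same Z
  have sup_eq : d ⊔ e = d ⊓ e + (d - d ⊓ e) + (e - d ⊓ e) := by
    linear_combination inf_add_sup d e
  have submodular := det_add_add_mul_det_le_of_posSemidef (gram_posSemidef (le_inf hd he))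
    (gram_posSemidef (sub_nonneg.mpr (inf_le_left : d ⊓ e ≤ d)))
    (gram_posSemidef (sub_nonneg.mpr (inf_le_right : d ⊓ e ≤ e)))
  simp only [← gram_add] at submodular
  rwa [← sup_eq, add_sub_cancel, add_sub_cancel] at submodular

end PosSemidef

/-- Log-submodularity of a real function on a lattice, in multiplicative form so that the function
may vanish. -/
def LogSubmodular {L : Type*} [Lattice L] (f : L → ℝ) : Prop :=
  ∀ a b, f (a ⊔ b) * f (a ⊓ b) ≤ f a * f b

section RandomFinset

open MeasureTheory

variable {α : Type*}

/-- The event that a random finite set misses `X`. -/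
def avoiding (X : Finset α) : Set (Finset α) := {K | Disjoint K X}

theorem avoiding_empty : avoiding (∅ : Finset α) = Set.univ := by
  ext K
  simp [avoiding]

theorem measurableSet_avoiding (X : Finset α) : MeasurableSet (avoiding X) := by
  have avoiding_eq : avoiding X = ⋂ x ∈ X, {K | x ∉ K} := by
    ext K
    simp [avoiding, Finset.disjoint_right]
  rw [avoiding_eq]
  exact X.measurableSet_biInter fun x _ ↦ (measurable_finset_mem x).not.setOf

variable [DecidableEq α]

/-- The event that a random finite set meets `X`: the increasing event generated by the points
of `X`. -/
def hitting (X : Finset α) : Set (Finset α) := {K | (K ∩ X).Nonempty}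

/-- The event `𝔄 ∘ 𝔅` of disjoint occurrence of `𝔄 = hitting X` and `𝔅 = hitting Y`. -/
def disjointlyHitting (X Y : Finset α) : Set (Finset α) :=
  {K | ∃ x ∈ X, ∃ y ∈ Y, x ≠ y ∧ x ∈ K ∧ y ∈ K}

/-- The event that a random finite set meets `X` at `x` and nowhere else; it is empty unless
`x ∈ X`. -/
def meetingOnlyAt (X : Finset α) (x : α) : Set (Finset α) := {K | K ∩ X = {x}}

theorem compl_avoiding (X : Finset α) : (avoiding X)ᶜ = hitting X := by
  ext K
  simp [avoiding, hitting, Finset.not_disjoint_iff_nonempty_inter]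

theorem avoiding_inter_avoiding (X Y : Finset α) :
    avoiding X ∩ avoiding Y = avoiding (X ∪ Y) := by
  ext K
  simp [avoiding, Finset.disjoint_union_right]

theorem hitting_eq_biUnion (X : Finset α) : hitting X = ⋃ x ∈ X, hitting {x} := by
  ext K
  simp [hitting, Finset.Nonempty, and_comm]

theorem avoiding_erase_sdiff_avoiding {X : Finset α} {x : α} (hx : x ∈ X) :
    avoiding (X.erase x) \ avoiding X = meetingOnlyAt X x := by
  ext K
  simp only [avoiding, meetingOnlyAt, Set.mem_sdiff, Set.mem_ofPred_eq, Finset.disjoint_left,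
    Finset.ext_iff, Finset.mem_inter, Finset.mem_erase, Finset.mem_singleton]
  grind

theorem measurableSet_meetingOnlyAt {X : Finset α} {x : α} (hx : x ∈ X) :
    MeasurableSet (meetingOnlyAt X x) := by
  rw [← avoiding_erase_sdiff_avoiding hx]
  exact (measurableSet_avoiding _).diff (measurableSet_avoiding _)

theorem pairwise_disjoint_meetingOnlyAt (X : Finset α) :
    Pairwise (Function.onFun Disjoint (meetingOnlyAt X)) := by
  intro x y hxy
  rw [Function.onFun, Set.disjoint_left]
  rintro K hx hy
  exact hxy (Finset.singleton_injective (hx.symm.trans hy))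

theorem disjoint_avoiding_union_avoiding_biUnion_meetingOnlyAt (X Y : Finset α) :
    Disjoint (avoiding X ∪ avoiding Y) (⋃ z ∈ X ∩ Y, meetingOnlyAt (X ∪ Y) z) := by
  rw [Set.disjoint_left]
  simp only [avoiding, meetingOnlyAt, Set.mem_union, Set.mem_ofPred_eq, Set.mem_iUnion,
    Finset.disjoint_left, Finset.ext_iff, Finset.mem_inter, Finset.mem_union, Finset.mem_singleton]
  grind

theorem disjointlyHitting_eq_compl (X Y : Finset α) :
    disjointlyHitting X Y =
      (avoiding X ∪ avoiding Y ∪ ⋃ z ∈ X ∩ Y, meetingOnlyAt (X ∪ Y) z)ᶜ := by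
  ext K
  simp only [disjointlyHitting, avoiding, meetingOnlyAt, Set.mem_compl_iff, Set.mem_union,
    Set.mem_ofPred_eq, Set.mem_iUnion, Finset.disjoint_left, Finset.ext_iff, Finset.mem_inter,
    Finset.mem_union, Finset.mem_singleton]
  grind

theorem measureReal_hitting_le_sum (μ : Measure (Finset α)) (X : Finset α) :
    μ.real (hitting X) ≤ ∑ x ∈ X, μ.real (hitting {x}) := by
  rw [hitting_eq_biUnion]
  exact measureReal_biUnion_finset_le X _

section IsFiniteMeasure

variable (μ : Measure (Finset α)) [IsFiniteMeasure μ]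

theorem measureReal_hitting (X : Finset α) :
    μ.real (hitting X) = μ.real Set.univ - μ.real (avoiding X) := by
  rw [← compl_avoiding, measureReal_compl (measurableSet_avoiding X)]

theorem measureReal_meetingOnlyAt {X : Finset α} {x : α} (hx : x ∈ X) :
    μ.real (meetingOnlyAt X x) = μ.real (avoiding (X.erase x)) - μ.real (avoiding X) := by
  rw [← avoiding_erase_sdiff_avoiding hx]
  refine measureReal_sdiff (fun K hK ↦ ?_) (measurableSet_avoiding X)
  exact Finset.disjoint_of_subset_right (X.erase_subset x) hK

theorem measureReal_avoiding_union_avoiding (X Y : Finset α) :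
    μ.real (avoiding X ∪ avoiding Y) =
      μ.real (avoiding X) + μ.real (avoiding Y) - μ.real (avoiding (X ∪ Y)) := by
  rw [← avoiding_inter_avoiding, eq_sub_iff_add_eq]
  exact measureReal_union_add_inter (measurableSet_avoiding Y)

theorem measureReal_disjointlyHitting (X Y : Finset α) :
    μ.real (disjointlyHitting X Y) =
      μ.real Set.univ - (μ.real (avoiding X) + μ.real (avoiding Y) - μ.real (avoiding (X ∪ Y)) +
        ∑ z ∈ X ∩ Y, μ.real (meetingOnlyAt (X ∪ Y) z)) := by
  have meas_avoiding := (measurableSet_avoiding X).union (measurableSet_avoiding Y)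
  have meas_meeting : ∀ z ∈ X ∩ Y, MeasurableSet (meetingOnlyAt (X ∪ Y) z) := fun _ hz ↦
    measurableSet_meetingOnlyAt (Finset.inter_subset_union hz)
  have meas_biUnion := (X ∩ Y).measurableSet_biUnion meas_meeting
  rw [disjointlyHitting_eq_compl, measureReal_compl (meas_avoiding.union meas_biUnion),
    measureReal_union (disjoint_avoiding_union_avoiding_biUnion_meetingOnlyAt X Y) meas_biUnion
      (measure_ne_top μ _) (measure_ne_top μ _),
    measureReal_biUnion_finset ((pairwise_disjoint_meetingOnlyAt _).set_pairwise _) meas_meeting,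
    measureReal_avoiding_union_avoiding]

end IsFiniteMeasure

section LogSubmodular

variable {μ : Measure (Finset α)} [IsFiniteMeasure μ]
  (hμ : LogSubmodular fun X ↦ μ.real (avoiding X))

include hμ

theorem measureReal_avoiding_mul_hitting_singleton_le {X : Finset α} {x : α} (hx : x ∈ X) :
    μ.real (avoiding X) * μ.real (hitting {x}) ≤
      μ.real Set.univ * μ.real (meetingOnlyAt X x) := by
  have union_eq : X.erase x ∪ {x} = X := by grind
  have inter_eq : X.erase x ∩ {x} = ∅ := by grind
  have submodular : μ.real (avoiding X) * μ.real Set.univ ≤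
      μ.real (avoiding (X.erase x)) * μ.real (avoiding {x}) := by
    simpa only [Finset.sup_eq_union, Finset.inf_eq_inter, union_eq, inter_eq, avoiding_empty]
      using hμ (X.erase x) {x}
  have meeting_mul_hitting_nonneg :
      0 ≤ μ.real (meetingOnlyAt X x) * μ.real (hitting {x}) := by positivity
  rw [measureReal_meetingOnlyAt μ hx, measureReal_hitting] at meeting_mul_hitting_nonneg ⊢
  linarith

theorem measureReal_avoiding_mul_hitting_le {X Y : Finset α} (hXY : X ⊆ Y) :
    μ.real (avoiding Y) * μ.real (hitting X) ≤
      μ.real Set.univ * ∑ x ∈ X, μ.real (meetingOnlyAt Y x) := by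
  calc μ.real (avoiding Y) * μ.real (hitting X)
      ≤ μ.real (avoiding Y) * ∑ x ∈ X, μ.real (hitting {x}) :=
        mul_le_mul_of_nonneg_left (measureReal_hitting_le_sum μ X) measureReal_nonneg
    _ ≤ μ.real Set.univ * ∑ x ∈ X, μ.real (meetingOnlyAt Y x) := by
        rw [Finset.mul_sum, Finset.mul_sum]
        exact Finset.sum_le_sum fun x hx ↦
          measureReal_avoiding_mul_hitting_singleton_le hμ (hXY hx)

theorem measureReal_univ_mul_disjointlyHitting_le (X Y : Finset α) :
    μ.real Set.univ * μ.real (disjointlyHitting X Y) ≤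
      μ.real (hitting X) * μ.real (hitting Y) := by
  have submodular : μ.real (avoiding (X ∪ Y)) * μ.real (avoiding (X ∩ Y)) ≤
    μ.real (avoiding X) * μ.real (avoiding Y) := hμ X Y
  have meeting := measureReal_avoiding_mul_hitting_le hμ
    (Finset.inter_subset_union : X ∩ Y ⊆ X ∪ Y)
  simp only [measureReal_hitting, measureReal_disjointlyHitting] at meeting ⊢
  set t := μ.real Set.univ
  set a := μ.real (avoiding X)
  set b := μ.real (avoiding Y)
  set u := μ.real (avoiding (X ∪ Y))
  set c := μ.real (avoiding (X ∩ Y))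
  set M := ∑ z ∈ X ∩ Y, μ.real (meetingOnlyAt (X ∪ Y) z)
  calc t * (t - (a + b - u + M)) = t * (t - a - b + u) - t * M := by ring
    _ ≤ t * (t - a - b + u) - u * (t - c) := by gcongr
    _ = t * (t - a - b) + u * c := by ring
    _ ≤ t * (t - a - b) + a * b := by gcongr
    _ = (t - a) * (t - b) := by ring

end LogSubmodular

end RandomFinset

section DeterminantalProcess

open MeasureTheory

variable {N q : ℕ} (Z : Matrix (Fin q) (Fin N) ℝ)

theorem detSq_nonneg (S : Finset (Fin N)) : 0 ≤ detSq Z S := by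
  unfold detSq
  split_ifs <;> positivity

theorem sum_prod_mul_detSq (d : Fin N → ℝ) :
    ∑ S, (∏ i ∈ S, d i) * detSq Z S = (Z * diagonal d * Zᵀ).det := by
  rw [det_mul_diagonal_mul_eq_sum_powersetCard]
  refine (Fintype.sum_of_injective Subtype.val Subtype.val_injective _ _ (fun S hS ↦ ?_)
    fun s ↦ ?_).symm
  · have card_ne : S.card ≠ q := by simpa using hS
    rw [detSq, dif_neg card_ne, mul_zero]
  · have detSq_eq : detSq Z s =
        (Z.submatrix id (Set.powersetCard.ofFinEmbEquiv.symm s)).det ^ 2 := dif_pos s.2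
    rw [detSq_eq, ← transpose_submatrix, det_transpose, sq]

/-- The determinantal process of `Z` as a measure, giving `E` the mass `prDP Z E`. It has total
mass `det (Z * Zᵀ)`, hence is a probability measure when the rows of `Z` are orthonormal. -/
noncomputable def detProcess : Measure (Finset (Fin N)) :=
  ∑ S, (detSq Z S).toNNReal • Measure.dirac S

instance : IsFiniteMeasure (detProcess Z) := by
  unfold detProcess
  infer_instance

theorem detProcess_real (E : Set (Finset (Fin N))) : (detProcess Z).real E = prDP Z E := by
  rw [measureReal_def, detProcess, prDP, Measure.finsetSum_apply,
    ENNReal.toReal_sum fun S _ ↦ measure_ne_top _ E]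
  refine Finset.sum_congr rfl fun S _ ↦ ?_
  by_cases hS : S ∈ E <;> simp [hS, detSq_nonneg]

theorem detProcess_real_avoiding (X : Finset (Fin N)) : (detProcess Z).real (avoiding X) =
    (Z * diagonal ((X : Set (Fin N))ᶜ.indicator (1 : Fin N → ℝ)) * Zᵀ).det := by
  rw [detProcess_real, prDP, ← sum_prod_mul_detSq]
  refine Finset.sum_congr rfl fun S _ ↦ ?_
  split_ifs with hS
  · have notMem : ∀ i ∈ S, i ∉ X := fun _ hi ↦ Finset.disjoint_left.mp hS hi
    rw [Finset.prod_eq_one fun i hi ↦ by simp [notMem i hi], one_mul]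
  · obtain ⟨i, hiS, hiX⟩ := Finset.not_disjoint_iff.mp hS
    rw [Finset.prod_eq_zero hiS (by simp [hiX]), zero_mul]

theorem detProcess_real_univ : (detProcess Z).real Set.univ = (Z * Zᵀ).det := by
  simp [← avoiding_empty, detProcess_real_avoiding]

theorem logSubmodular_detProcess_real_avoiding :
    LogSubmodular fun X ↦ (detProcess Z).real (avoiding X) := by
  intro X Y
  let outside (T : Finset (Fin N)) : Fin N → ℝ := (T : Set (Fin N))ᶜ.indicator 1
  have outside_nonneg (T : Finset (Fin N)) : 0 ≤ outside T := Set.indicator_nonneg (by simp)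
  have outside_union : outside (X ∪ Y) = outside X ⊓ outside Y := by
    ext i
    by_cases hX : i ∈ X <;> by_cases hY : i ∈ Y <;> simp [outside, hX, hY]
  have outside_inter : outside (X ∩ Y) = outside X ⊔ outside Y := by
    ext i
    by_cases hX : i ∈ X <;> by_cases hY : i ∈ Y <;> simp [outside, hX, hY]
  have submodular := det_mul_diagonal_sup_mul_det_mul_diagonal_inf_le Z
    (outside_nonneg X) (outside_nonneg Y)
  rw [← outside_union, ← outside_inter, mul_comm] at submodular
  simpa only [detProcess_real_avoiding]

end DeterminantalProcess

theorem bk_inequality_simple_points_general {N p : ℕ} (Z : Matrix (Fin p) (Fin N) ℝ)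
    (X Y : Finset (Fin N)) :
    (Z * Zᵀ).det * prDP Z {K | ∃ x ∈ X, ∃ y ∈ Y, x ≠ y ∧ x ∈ K ∧ y ∈ K}
      ≤ prDP Z {A | (A ∩ X).Nonempty} * prDP Z {A | (A ∩ Y).Nonempty} := by
  rw [← detProcess_real_univ, ← detProcess_real, ← detProcess_real, ← detProcess_real]
  exact measureReal_univ_mul_disjointlyHitting_le (logSubmodular_detProcess_real_avoiding Z) X Y

/-- the van den Berg–Kesten inequality for increasing events generated by
simple points: P(φ ∈ 𝔄∘𝔅) ≤ P(φ ∈ 𝔄) · P(φ ∈ 𝔅). -/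
theorem bk_inequality_simple_points {N p : ℕ} (hp : 1 < p) (hpN : p < N)
    (Z : Matrix (Fin p) (Fin N) ℝ) (hZ : Z * Zᵀ = 1)
    (X Y : Finset (Fin N)) (hX : X.Nonempty) (hY : Y.Nonempty) :
    prDP Z {K | ∃ x ∈ X, ∃ y ∈ Y, x ≠ y ∧ x ∈ K ∧ y ∈ K}
      ≤ prDP Z {A | (A ∩ X).Nonempty} * prDP Z {A | (A ∩ Y).Nonempty} := by
  simpa [hZ] using bk_inequality_simple_points_general Z X Y
end

section
/- Let X, Y ⊆ {1,…,N} be nonempty sets and let 𝔄 = {A : A ∩ X ≠ ∅}, 𝔅 = {A : A ∩ Y ≠ ∅} be the increasing events generated by their simple points. Suppose that for every q with 1 ≤ q < N and every q × N real matrix W with orthonormal rows, the associated determinantal process ψ = φ(W) satisfies P(ψ ∈ 𝔄∘𝔅) ≤ P(ψ ∈ 𝔄) · P(ψ ∈ 𝔅). Let x₀ ∈ {1,…,N} with x₀ ∉ X ∪ Y, and let 𝔄̃ = {A : A ∩ (X ∪ {x₀}) ≠ ∅} be the increasing event generated by x₀ together with the points of X. Then for every q with 1 ≤ q < N and every q ×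 N real matrix W with orthonormal rows, P(ψ ∈ 𝔄̃∘𝔅) ≤ P(ψ ∈ 𝔄̃) · P(ψ ∈ 𝔅), where for increasing events 𝔄, 𝔅 the disjoint intersection is 𝔄∘𝔅 = {K ⊆ {1,…,N} : ∃ nonempty L ∈ 𝔄 and M ∈ 𝔅 with L ∩ M = ∅ and L ∪ M ⊆ K}. -/
open Matrix

/-- The disjoint intersection 𝔄∘𝔅 of two events: the family of all K containing the
union of a nonempty L ∈ 𝔄 and a nonempty M ∈ 𝔅 with L ∩ M = ∅. -/
def disjInt {N : ℕ} (A B : Set (Finset (Fin N))) : Set (Finset (Fin N)) :=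
  {K | ∃ L M : Finset (Fin N),
    L ∈ A ∧ M ∈ B ∧ L.Nonempty ∧ M.Nonempty ∧ Disjoint L M ∧ L ∪ M ⊆ K}

/-!
Split every event according to whether `x₀ ∈ ψ`. If `x₀ ∈ ψ`, the enlarged event holds
automatically, and its disjoint intersection with `𝔅` is contained in `𝔅`. Conditioned on
`x₀ ∉ ψ`, the process is again determinantal of the same rank: erase the column of `x₀` and
orthonormalize the rows. There the assumed inequality applies, and adjoining `x₀` changes nothing.

Putting the two cases together requires that `ψ` meeting `Y` and `x₀ ∉ ψ` be positively
correlated. By Cauchy–Binet, `P(ψ ⊆ T)` is the determinant of the Gram matrix `∑ k ∈ T, w_k w_kᵀ`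
of the columns `w_k`, and erasing `x` from `T` is a rank-one downdate. By the matrix determinant
lemma, the factor by which this lowers the determinant is governed by the quadratic form of the
inverse Gram matrix, which decreases as `T` grows.
-/

section Determinant

variable {R : Type*} [CommRing R]

theorem det_mul_eq_sum_prod_mul_det {m n : Type*} [Fintype m] [DecidableEq m] [Fintype n]
    (A : Matrix m n R) (B : Matrix n m R) :
    (A * B).det = ∑ p : m → n, (∏ i, A i (p i)) * (B.submatrix p id).det := by
  have hrows : A * B = fun i => ∑ k, A i k • B k := by
    ext i j
    simp [mul_apply, Finset.sum_apply]
  calc (A * B).det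
      = detRowAlternating.toMultilinearMap fun i => ∑ k, A i k • B k := by rw [hrows]; rfl
    _ = ∑ p : m → n, detRowAlternating.toMultilinearMap fun i => A i (p i) • B (p i) :=
        MultilinearMap.map_sum _ _
    _ = _ := Finset.sum_congr rfl fun p _ => MultilinearMap.map_smul_univ _ _ _

theorem injective_orderEmbedding_comp_perm {n : Type*} [PartialOrder n] (q : ℕ) :
    Function.Injective fun x : (Fin q ↪o n) × Equiv.Perm (Fin q) => (x.1 ∘ x.2 : Fin q → n) := by
  rintro ⟨f, σ⟩ ⟨g, τ⟩ h
  have hrange : Set.range f = Set.range g := by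
    rw [← σ.surjective.range_comp f, ← τ.surjective.range_comp g]
    exact congrArg Set.range h
  obtain rfl := OrderEmbedding.range_inj.mp hrange
  have hστ : σ = τ := Equiv.ext fun i => f.injective (congrFun h i)
  rw [hστ]

theorem exists_orderEmbedding_comp_perm_eq {n : Type*} [LinearOrder n] {q : ℕ} {p : Fin q → n}
    (hp : Function.Injective p) :
    ∃ (f : Fin q ↪o n) (σ : Equiv.Perm (Fin q)), f ∘ σ = p :=
  ⟨OrderEmbedding.ofStrictMono (p ∘ Tuple.sort p)
      ((Tuple.monotone_sort p).strictMono_of_injective (hp.comp (Tuple.sort p).injective)),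
    (Tuple.sort p)⁻¹, by ext i; simp⟩

/-- The **Cauchy–Binet formula**. The `q`-element subsets of `n` are encoded by their increasing
enumerations. -/
theorem det_mul_eq_sum_orderEmbedding {n : Type*} [Fintype n] [LinearOrder n] {q : ℕ}
    (A : Matrix (Fin q) n R) (B : Matrix n (Fin q) R) :
    (A * B).det = ∑ f : Fin q ↪o n, (A.submatrix id f).det * (B.submatrix f id).det := by
  have hnoninj (p : Fin q → n)
      (hp : p ∉ Set.range fun x : (Fin q ↪o n) × Equiv.Perm (Fin q) => (x.1 ∘ x.2 : Fin q → n)) :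
      (∏ i, A i (p i)) * (B.submatrix p id).det = 0 := by
    have hp' : ¬ Function.Injective p := fun hinj =>
      hp (let ⟨f, σ, h⟩ := exists_orderEmbedding_comp_perm_eq hinj; ⟨(f, σ), h⟩)
    obtain ⟨i, j, hij, hne⟩ := Function.not_injective_iff.mp hp'
    rw [det_zero_of_row_eq hne (by ext; simp [hij]), mul_zero]
  have hperm (f : Fin q ↪o n) (σ : Equiv.Perm (Fin q)) :
      (B.submatrix (f ∘ σ) id).det = Equiv.Perm.sign σ * (B.submatrix f id).det :=
    det_permute σ (B.submatrix f id)
  rw [det_mul_eq_sum_prod_mul_det, ← Fintype.sum_of_injective _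
    (injective_orderEmbedding_comp_perm q) _ _ hnoninj fun _ => rfl, Fintype.sum_prod_type]
  refine Finset.sum_congr rfl fun f _ => ?_
  rw [← det_transpose (A.submatrix id f), det_apply', Finset.sum_mul]
  refine Finset.sum_congr rfl fun σ _ => ?_
  simp only [hperm, transpose_apply, submatrix_apply, id, Function.comp_apply]
  ring

theorem det_sub_vecMulVec {m : Type*} [Fintype m] [DecidableEq m] {A : Matrix m m R}
    (hA : IsUnit A.det) (u v : m → R) :
    (A - vecMulVec u v).det = A.det * (1 - v ⬝ᵥ A⁻¹ *ᵥ u) := by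
  have hscalar : replicateRow Unit v * A⁻¹ * replicateCol Unit (-u)
      = of fun _ _ => -(v ⬝ᵥ A⁻¹ *ᵥ u) := by
    rw [Matrix.mul_assoc, ← replicateCol_mulVec, mulVec_neg]
    ext
    simp
  rw [sub_eq_add_neg, ← neg_vecMulVec, vecMulVec_eq Unit,
    det_add_replicateCol_mul_replicateRow hA, hscalar, det_unique (n := Unit)]
  simp [sub_eq_add_neg]

end Determinant

section Positivity

variable {m 𝕜 : Type*} [Fintype m] [DecidableEq m] [RCLike 𝕜]

open scoped ComplexOrder MatrixOrder

-- Both differences are Schur complements of the block matrix `[[A⁻¹, 1], [1, B]]`.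
theorem posSemidef_inv_sub_inv {A B : Matrix m m 𝕜} (hA : A.PosDef)
    (hAB : (B - A).PosSemidef) : (A⁻¹ - B⁻¹).PosSemidef := by
  have hB : B.PosDef := by simpa using hA.add_posSemidef hAB
  let _ := hA.inv.isUnit.invertible
  let _ := hB.isUnit.invertible
  have hblock : (fromBlocks A⁻¹ 1 (1 : Matrix m m 𝕜)ᴴ B).PosSemidef := by
    rw [hA.inv.fromBlocks₁₁]
    simpa [nonsing_inv_nonsing_inv A ((isUnit_iff_isUnit_det A).mp hA.isUnit)] using hAB
  simpa using (hB.fromBlocks₂₂ A⁻¹ 1).mp hblock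

theorem det_sub_vecMulVec_mul_det_le {A B : Matrix m m 𝕜} (hA : A.PosDef)
    (hAB : (B - A).PosSemidef) (w : m → 𝕜) :
    (A - vecMulVec w (star w)).det * B.det ≤ A.det * (B - vecMulVec w (star w)).det := by
  have hB : B.PosDef := by simpa using hA.add_posSemidef hAB
  have hquad : star w ⬝ᵥ B⁻¹ *ᵥ w ≤ star w ⬝ᵥ A⁻¹ *ᵥ w := by
    have := (posSemidef_inv_sub_inv hA hAB).dotProduct_mulVec_nonneg w
    rwa [sub_mulVec, dotProduct_sub, sub_nonneg] at this
  rw [det_sub_vecMulVec hA.det_pos.ne'.isUnit, det_sub_vecMulVec hB.det_pos.ne'.isUnit]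
  calc A.det * (1 - star w ⬝ᵥ A⁻¹ *ᵥ w) * B.det
      = A.det * B.det * (1 - star w ⬝ᵥ A⁻¹ *ᵥ w) := by ring
    _ ≤ A.det * B.det * (1 - star w ⬝ᵥ B⁻¹ *ᵥ w) :=
        mul_le_mul_of_nonneg_left (sub_le_sub_left hquad 1)
          (mul_nonneg hA.det_pos.le hB.det_pos.le)
    _ = A.det * (B.det * (1 - star w ⬝ᵥ B⁻¹ *ᵥ w)) := by ring

theorem exists_mul_mul_conjTranspose_eq_one {G : Matrix m m 𝕜} (hG : G.PosDef) :
    ∃ M : Matrix m m 𝕜, M * G * Mᴴ = 1 := by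
  obtain ⟨B, hB, rfl⟩ :=
    CStarAlgebra.isStrictlyPositive_iff_eq_star_mul_self.mp hG.isStrictlyPositive
  have hBdet : IsUnit B.det := (isUnit_iff_isUnit_det B).mp hB
  have hBBinv : B * B⁻¹ = 1 := mul_nonsing_inv B hBdet
  refine ⟨(B⁻¹)ᴴ, ?_⟩
  calc (B⁻¹)ᴴ * (Bᴴ * B) * (B⁻¹)ᴴᴴ
      = (B * B⁻¹)ᴴ * (B * B⁻¹) := by
        simp only [conjTranspose_conjTranspose, conjTranspose_mul, Matrix.mul_assoc]
    _ = 1 := by simp [hBBinv]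

end Positivity

section RestrictCols

variable {m n R : Type*} [DecidableEq n]

/-- The matrix `Z` with the columns outside `T` replaced by zero. Restricting the columns conditions
the determinantal process of `Z`, up to normalization, on being contained in `T`. -/
def restrictCols [Zero R] (Z : Matrix m n R) (T : Finset n) : Matrix m n R :=
  Matrix.of fun i j => if j ∈ T then Z i j else 0

theorem restrictCols_mul_transpose [Fintype n] [NonUnitalNonAssocSemiring R]
    (Z : Matrix m n R) (T : Finset n) :
    restrictCols Z T * (restrictCols Z T)ᵀ = ∑ k ∈ T, vecMulVec (Z.col k) (Z.col k) := by
  ext i j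
  simp [restrictCols, mul_apply, Matrix.sum_apply, vecMulVec_apply, Finset.sum_ite_mem]

end RestrictCols

section DetSq

variable {q N : ℕ} (Z : Matrix (Fin q) (Fin N) ℝ)

theorem detSq_nonneg_s2 : 0 ≤ detSq Z := fun S => by
  unfold detSq
  split_ifs
  exacts [sq_nonneg _, le_rfl]

theorem detSq_map (f : Fin q ↪o Fin N) :
    detSq Z (Finset.univ.map f.toEmbedding) = (Z.submatrix id f).det ^ 2 := by
  have hcard : (Finset.univ.map f.toEmbedding).card = q := by simp
  have hf : f = (Finset.univ.map f.toEmbedding).orderEmbOfFin hcard :=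
    Finset.orderEmbOfFin_unique' hcard (by simp)
  rw [detSq, dif_pos hcard]
  conv_rhs => rw [hf]
  rfl

theorem detSq_mul (M : Matrix (Fin q) (Fin q) ℝ) (S : Finset (Fin N)) :
    detSq (M * Z) S = M.det ^ 2 * detSq Z S := by
  unfold detSq
  split_ifs with h
  · rw [← mul_pow, ← det_mul]
    rfl
  · rw [mul_zero]

theorem detSq_restrictCols (T : Finset (Fin N)) :
    detSq (restrictCols Z T) = (Set.Iic T).indicator (detSq Z) := by
  ext S
  by_cases hST : S ⊆ T
  · rw [Set.indicator_of_mem (Set.mem_Iic.mpr hST)]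
    simp only [detSq, restrictCols, of_apply, hST (Subtype.coe_prop _), if_true]
  · rw [Set.indicator_of_notMem (mt Set.mem_Iic.mp hST), detSq]
    split_ifs with h
    · obtain ⟨x, hxS, hxT⟩ := Finset.not_subset.mp hST
      rw [det_eq_zero_of_column_eq_zero ((S.orderIsoOfFin h).symm ⟨x, hxS⟩)
        fun i => by simp [restrictCols, -Finset.coe_orderIsoOfFin_apply, hxT], zero_pow two_ne_zero]
    · rfl

theorem sum_detSq : ∑ S, detSq Z S = (Z * Zᵀ).det := by
  have hinj : Function.Injective fun f : Fin q ↪o Fin N => Finset.univ.map f.toEmbedding := by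
    intro f g h
    refine OrderEmbedding.range_inj.mp ?_
    simpa using congrArg (SetLike.coe : Finset (Fin N) → Set (Fin N)) h
  have hcard (S : Finset (Fin N))
      (hS : S ∉ Set.range fun f : Fin q ↪o Fin N => Finset.univ.map f.toEmbedding) :
      detSq Z S = 0 :=
    dif_neg fun h => hS ⟨S.orderEmbOfFin h, Finset.map_orderEmbOfFin_univ S h⟩
  rw [det_mul_eq_sum_orderEmbedding, ← Fintype.sum_of_injective _ hinj _ _ hcard fun _ => rfl]
  refine Finset.sum_congr rfl fun f _ => ?_
  rw [detSq_map, sq, ← transpose_submatrix, det_transpose]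

end DetSq

section Probability

variable {q N : ℕ} (Z : Matrix (Fin q) (Fin N) ℝ) {E F G : Set (Finset (Fin N))}

theorem prDP_eq_sum_indicator (E : Set (Finset (Fin N))) :
    prDP Z E = ∑ S, E.indicator (detSq Z) S := rfl

theorem prDP_nonneg (E : Set (Finset (Fin N))) : 0 ≤ prDP Z E :=
  Finset.sum_nonneg fun S _ => Set.indicator_nonneg (fun S _ => detSq_nonneg_s2 Z S) S

theorem prDP_mono (h : E ⊆ F) : prDP Z E ≤ prDP Z F :=
  Finset.sum_le_sum fun S _ => Set.indicator_le_indicator_of_subset h (detSq_nonneg_s2 Z) S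

theorem prDP_inter_add_inter_compl (E F : Set (Finset (Fin N))) :
    prDP Z (E ∩ F) + prDP Z (E ∩ Fᶜ) = prDP Z E := by
  simp only [prDP_eq_sum_indicator, ← Finset.sum_add_distrib]
  refine Finset.sum_congr rfl fun S _ => ?_
  rw [Set.inter_comm E, Set.inter_comm E, ← Set.indicator_indicator, ← Set.indicator_indicator]
  exact congrFun (Set.indicator_self_add_compl F (E.indicator (detSq Z))) S

theorem prDP_mul (M : Matrix (Fin q) (Fin q) ℝ) (E : Set (Finset (Fin N))) :
    prDP (M * Z) E = M.det ^ 2 * prDP Z E := by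
  have hdet : detSq (M * Z) = fun S => M.det ^ 2 * detSq Z S := funext (detSq_mul Z M)
  simp only [prDP_eq_sum_indicator, Finset.mul_sum, hdet, Set.indicator_const_mul]

theorem prDP_univ : prDP Z Set.univ = (Z * Zᵀ).det := by
  simp only [prDP_eq_sum_indicator, Set.indicator_univ, sum_detSq]

theorem prDP_restrictCols (T : Finset (Fin N)) (E : Set (Finset (Fin N))) :
    prDP (restrictCols Z T) E = prDP Z (E ∩ Set.Iic T) := by
  rw [prDP_eq_sum_indicator, detSq_restrictCols, Set.indicator_indicator, prDP_eq_sum_indicator]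

theorem prDP_Iic (T : Finset (Fin N)) :
    prDP Z (Set.Iic T) = (∑ k ∈ T, vecMulVec (Z.col k) (Z.col k)).det := by
  rw [← restrictCols_mul_transpose, ← prDP_univ, prDP_restrictCols, Set.univ_inter]

theorem prDP_Iic_erase_mul_prDP_Iic_le {S T : Finset (Fin N)} (hST : S ⊆ T) {x : Fin N}
    (hx : x ∈ S) :
    prDP Z (Set.Iic (S.erase x)) * prDP Z (Set.Iic T)
      ≤ prDP Z (Set.Iic S) * prDP Z (Set.Iic (T.erase x)) := by
  have hpos (U : Finset (Fin N)) : (∑ k ∈ U, vecMulVec (Z.col k) (Z.col k)).PosSemidef :=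
    posSemidef_sum U fun k _ => by simpa using posSemidef_vecMulVec_self_star (Z.col k)
  by_cases hS : prDP Z (Set.Iic S) = 0
  · have herase : prDP Z (Set.Iic (S.erase x)) = 0 :=
      le_antisymm (hS ▸ prDP_mono Z (Set.Iic_subset_Iic.mpr (S.erase_subset x))) (prDP_nonneg Z _)
    rw [herase, hS, zero_mul, zero_mul]
  · have hdef := (hpos S).posDef_iff_det_ne_zero.mpr (prDP_Iic Z S ▸ hS)
    have hdiff := hpos (T \ S)
    rw [Finset.sum_sdiff_eq_sub hST] at hdiff
    simpa only [prDP_Iic, Finset.sum_erase_eq_sub hx, Finset.sum_erase_eq_sub (hST hx),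
      star_trivial] using det_sub_vecMulVec_mul_det_le hdef hdiff (Z.col x)

theorem prDP_mul_prDP_univ_le
    (h : ∀ W : Matrix (Fin q) (Fin N) ℝ, W * Wᵀ = 1 → prDP W E ≤ prDP W F * prDP W G) :
    prDP Z E * prDP Z Set.univ ≤ prDP Z F * prDP Z G := by
  by_cases hZ : (Z * Zᵀ).det = 0
  · rw [prDP_univ, hZ, mul_zero]
    exact mul_nonneg (prDP_nonneg Z F) (prDP_nonneg Z G)
  have hpos : (Z * Zᵀ).PosSemidef := by simpa using posSemidef_self_mul_conjTranspose Z
  obtain ⟨M, hM⟩ := exists_mul_mul_conjTranspose_eq_one (hpos.posDef_iff_det_ne_zero.mpr hZ)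
  have hMZ : M * Z * (M * Z)ᵀ = 1 := by
    simpa only [transpose_mul, conjTranspose_eq_transpose_of_trivial, Matrix.mul_assoc] using hM
  have hnorm : M.det ^ 2 * prDP Z Set.univ = 1 := by
    rw [← prDP_mul, prDP_univ, hMZ, det_one]
  have hle := h (M * Z) hMZ
  simp only [prDP_mul] at hle
  calc prDP Z E * prDP Z Set.univ
      = M.det ^ 2 * prDP Z E * prDP Z Set.univ ^ 2 := by
        linear_combination (-prDP Z E * prDP Z Set.univ) * hnorm
    _ ≤ M.det ^ 2 * prDP Z F * (M.det ^ 2 * prDP Z G) * prDP Z Set.univ ^ 2 :=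
        mul_le_mul_of_nonneg_right hle (sq_nonneg _)
    _ = (M.det ^ 2 * prDP Z Set.univ) ^ 2 * (prDP Z F * prDP Z G) := by ring
    _ = prDP Z F * prDP Z G := by rw [hnorm, one_pow, one_mul]

theorem prDP_inter_Iic_mul_prDP_Iic_le
    (h : ∀ W : Matrix (Fin q) (Fin N) ℝ, W * Wᵀ = 1 → prDP W E ≤ prDP W F * prDP W G)
    (T : Finset (Fin N)) :
    prDP Z (E ∩ Set.Iic T) * prDP Z (Set.Iic T)
      ≤ prDP Z (F ∩ Set.Iic T) * prDP Z (G ∩ Set.Iic T) := by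
  simpa only [prDP_restrictCols, Set.univ_inter] using prDP_mul_prDP_univ_le (restrictCols Z T) h

end Probability

section Orthonormal

variable {q N : ℕ} {W : Matrix (Fin q) (Fin N) ℝ}

theorem prDP_univ_eq_one (hW : W * Wᵀ = 1) : prDP W Set.univ = 1 := by
  rw [prDP_univ, hW, det_one]

theorem prDP_compl (hW : W * Wᵀ = 1) (E : Set (Finset (Fin N))) :
    prDP W Eᶜ = 1 - prDP W E := by
  have h := prDP_inter_add_inter_compl W Set.univ E
  rw [Set.univ_inter, Set.univ_inter, prDP_univ_eq_one hW] at h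
  exact eq_sub_of_add_eq' h

theorem prDP_Iic_inter_le (hW : W * Wᵀ = 1) {S : Finset (Fin N)} {x : Fin N} (hx : x ∈ S) :
    prDP W (Set.Iic S ∩ Set.Iic {x}ᶜ) ≤ prDP W (Set.Iic S) * prDP W (Set.Iic {x}ᶜ) := by
  have h := prDP_Iic_erase_mul_prDP_Iic_le W S.subset_univ hx
  rwa [← Finset.top_eq_univ, Set.Iic_top, prDP_univ_eq_one hW, mul_one, Finset.top_eq_univ,
    ← Finset.compl_singleton, ← Finset.sdiff_singleton_eq_erase, Finset.sdiff_eq_inter_compl,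
    ← Finset.inf_eq_inter, ← Set.Iic_inter_Iic] at h

theorem prDP_compl_mul_le_prDP_compl_inter (hW : W * Wᵀ = 1) {E F : Set (Finset (Fin N))}
    (h : prDP W (E ∩ F) ≤ prDP W E * prDP W F) :
    prDP W Eᶜ * prDP W F ≤ prDP W (Eᶜ ∩ F) := by
  have hsplit := prDP_inter_add_inter_compl W F E
  rw [Set.inter_comm F, Set.inter_comm F] at hsplit
  rw [prDP_compl hW]
  linarith

end Orthonormal

-- Multiplied by `f`, the gap between the two sides is at least `(f - a) * (b - t * f)`.
theorem add_mul_le_mul_add_of_mul_le {R : Type*} [CommRing R] [LinearOrder R]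
    [IsStrictOrderedRing R] {a b c f t : R} (ha : 0 ≤ a) (haf : a ≤ f) (hcf : c ≤ f)
    (htf : t * f ≤ b) (hcf_le : c * f ≤ a * b) : c + t * f ≤ a * t + b := by
  obtain rfl | hf := (ha.trans haf).eq_or_lt
  · obtain rfl : a = 0 := le_antisymm haf ha
    linarith
  · refine le_of_mul_le_mul_right ?_ hf
    calc (c + t * f) * f
        ≤ a * b + t * f * f := by linarith
      _ ≤ a * b + t * f * f + (f - a) * (b - t * f) :=
          le_add_of_nonneg_right (mul_nonneg (sub_nonneg.mpr haf) (sub_nonneg.mpr htf))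
      _ = (a * t + b) * f := by ring

section DisjointIntersection

variable {q N : ℕ} {W : Matrix (Fin q) (Fin N) ℝ} {A B F : Set (Finset (Fin N))}

theorem disjInt_subset_right (hB : IsUpperSet B) : disjInt A B ⊆ B := by
  rintro K ⟨L, M, -, hM, -, -, -, hLM⟩
  exact hB (Finset.subset_union_right.trans hLM) hM

theorem disjInt_union_compl_inter_subset (hF : IsLowerSet F) :
    disjInt (A ∪ Fᶜ) B ∩ F ⊆ disjInt A B ∩ F := by
  rintro K ⟨⟨L, M, hL, hM, hLne, hMne, hdisj, hLM⟩, hK⟩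
  have hLF : L ∈ F := hF (Finset.subset_union_left.trans hLM) hK
  exact ⟨⟨L, M, hL.resolve_right (not_not_intro hLF), hM, hLne, hMne, hdisj, hLM⟩, hK⟩

theorem prDP_disjInt_union_compl_le (hW : W * Wᵀ = 1) (hF : IsLowerSet F) (hB : IsUpperSet B)
    (hcorr : prDP W B * prDP W F ≤ prDP W (B ∩ F))
    (hBK : prDP W (disjInt A B ∩ F) * prDP W F ≤ prDP W (A ∩ F) * prDP W (B ∩ F)) :
    prDP W (disjInt (A ∪ Fᶜ) B) ≤ prDP W (A ∪ Fᶜ) * prDP W B := by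
  have hdisj : prDP W (disjInt (A ∪ Fᶜ) B) ≤ prDP W (disjInt A B ∩ F) + prDP W (B ∩ Fᶜ) := by
    rw [← prDP_inter_add_inter_compl W _ F]
    exact add_le_add (prDP_mono W (disjInt_union_compl_inter_subset hF))
      (prDP_mono W (Set.inter_subset_inter_left _ (disjInt_subset_right hB)))
  have hunion : prDP W (A ∪ Fᶜ) = prDP W (A ∩ F) + (1 - prDP W F) := by
    rw [← prDP_inter_add_inter_compl W _ F, ← prDP_compl hW, Set.union_inter_distrib_right,
      Set.compl_inter_self, Set.union_empty, Set.inter_eq_right.mpr Set.subset_union_right]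
  have hBsplit := prDP_inter_add_inter_compl W B F
  have hAF : prDP W (A ∩ F) ≤ prDP W F := prDP_mono W Set.inter_subset_right
  have hdisjF : prDP W (disjInt A B ∩ F) ≤ prDP W F := prDP_mono W Set.inter_subset_right
  have hle := add_mul_le_mul_add_of_mul_le (prDP_nonneg W _) hAF hdisjF hcorr hBK
  rw [hunion]
  linarith

end DisjointIntersection

theorem setOf_inter_nonempty_eq_compl_Iic {α : Type*} [Fintype α] [DecidableEq α] (Y : Finset α) :
    {A | (A ∩ Y).Nonempty} = (Set.Iic Yᶜ)ᶜ := by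
  ext A
  simp [Finset.subset_compl_iff_disjoint_right, Finset.not_disjoint_iff_nonempty_inter]

theorem bk_extend_by_point_general {q N : ℕ} {A : Set (Finset (Fin N))} {Y : Finset (Fin N)}
    (hBK : ∀ W : Matrix (Fin q) (Fin N) ℝ, W * Wᵀ = 1 →
      prDP W (disjInt A {B | (B ∩ Y).Nonempty}) ≤ prDP W A * prDP W {B | (B ∩ Y).Nonempty})
    {x₀ : Fin N} (hx₀ : x₀ ∉ Y) {W : Matrix (Fin q) (Fin N) ℝ} (hW : W * Wᵀ = 1) :
    prDP W (disjInt (A ∪ {S | x₀ ∈ S}) {B | (B ∩ Y).Nonempty})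
      ≤ prDP W (A ∪ {S | x₀ ∈ S}) * prDP W {B | (B ∩ Y).Nonempty} := by
  have hmem : {S | x₀ ∈ S} = (Set.Iic ({x₀}ᶜ : Finset (Fin N)))ᶜ := by
    ext S
    simp
  rw [setOf_inter_nonempty_eq_compl_Iic] at hBK ⊢
  rw [hmem]
  exact prDP_disjInt_union_compl_le hW (isLowerSet_Iic _) (isLowerSet_Iic _).compl
    (prDP_compl_mul_le_prDP_compl_inter hW (prDP_Iic_inter_le hW (Finset.mem_compl.mpr hx₀)))
    (prDP_inter_Iic_mul_prDP_Iic_le W hBK _)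

/-- Lemma 4: if the BK inequality holds for the increasing events generated by
the simple points of X and Y, for every discrete determinantal process on {1,…,N}, then it
still holds after adjoining to X one extra point x₀ ∉ X ∪ Y. -/
theorem bk_extend_by_point {N : ℕ} (hN : 1 < N)
    (X Y : Finset (Fin N)) (hX : X.Nonempty) (hY : Y.Nonempty)
    (hBK : ∀ q : ℕ, 1 ≤ q → q < N → ∀ W : Matrix (Fin q) (Fin N) ℝ, W * Wᵀ = 1 →
      prDP W (disjInt {A | (A ∩ X).Nonempty} {A | (A ∩ Y).Nonempty})
        ≤ prDP W {A | (A ∩ X).Nonempty} * prDP W {A | (A ∩ Y).Nonempty})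
    (x₀ : Fin N) (hx₀ : x₀ ∉ X ∪ Y) :
    ∀ q : ℕ, 1 ≤ q → q < N → ∀ W : Matrix (Fin q) (Fin N) ℝ, W * Wᵀ = 1 →
      prDP W (disjInt {A | (A ∩ (X ∪ {x₀})).Nonempty} {A | (A ∩ Y).Nonempty})
        ≤ prDP W {A | (A ∩ (X ∪ {x₀})).Nonempty} * prDP W {A | (A ∩ Y).Nonempty} := by
  intro q hq hqN W hW
  have hunion : {A | (A ∩ (X ∪ {x₀})).Nonempty} = {A | (A ∩ X).Nonempty} ∪ {A | x₀ ∈ A} := by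
    ext A
    have hmem : (A ∩ {x₀}).Nonempty ↔ x₀ ∈ A := by simp [Finset.Nonempty]
    simp only [Set.mem_union, Set.mem_ofPred_eq, Finset.inter_union_distrib_left,
      Finset.union_nonempty, hmem]
  rw [hunion]
  exact bk_extend_by_point_general (hBK q hq hqN) (mt (Finset.mem_union_right X) hx₀) hW
end

section
/- Let x₁,…,xₙ ∈ {1,…,N} be distinct points with n ≥ 2. Then P({x₁,…,xₙ} ⊆ φᶜ)^{n−1} ≤ ∏_{i=1}^{n} P({x_j : j ≠ i} ⊆ φᶜ). -/
open Matrix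

/-!
By the Cauchy–Binet formula, the probability that `φ` avoids `J` is the determinant of the Gram
matrix `∑ k ∉ J, z_k z_kᵀ` of the remaining columns `z_k` of `Z`. Removing a point `x_i` from `J`
adds the positive semidefinite matrix `z_{x_i} z_{x_i}ᵀ`, and removing all of them gives
`Z Zᵀ = 1`. The theorem is thus an instance of the log-submodularity of the determinant,
`det A * det (A + B + C) ≤ det (A + B) * det (A + C)` for positive semidefinite matrices, iterated.
Writing `C = Uᴴ U`, the latter says that `det (A + C) / det A = det (1 + U A⁻¹ Uᴴ)` decreases when
`B` is added to `A`, and it does because `(A + B)⁻¹ ≤ A⁻¹`.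
-/

section CauchyBinet

variable {m n R : Type*} [Fintype m] [DecidableEq m] [Fintype n] [DecidableEq n] [CommRing R]

open Polynomial in
theorem det_mul_eq_sum_minors (A : Matrix m n R) (B : Matrix n m R) :
    (A * B).det = ∑ S ∈ (Finset.univ : Finset n).powersetCard (Fintype.card m),
      ((B * A).submatrix ((↑) : S → n) (↑)).det := by
  rw [← coeff_det_one_add_X_smul_eq_sum_minors, ← coeff_det_X_add_C_card (A * B) 1]
  congr 1
  calc ((X : R[X]) • (A * B).map C + (1 : Matrix m m R).map C).det
      = (1 + A.map C * ((X : R[X]) • B.map C)).det := by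
        rw [Matrix.map_one _ C_0 C_1, Matrix.map_mul, Matrix.mul_smul, add_comm]
    _ = (1 + (X : R[X]) • (B * A).map C).det := by
        rw [det_one_add_mul_comm, Matrix.map_mul, Matrix.smul_mul]

end CauchyBinet

section LogSubmodular

open scoped ComplexOrder MatrixOrder

variable {𝕜 n : Type*} [RCLike 𝕜] [Fintype n] [DecidableEq n] {A B C : Matrix n n 𝕜}

theorem one_le_det_one_add (hA : A.PosSemidef) : 1 ≤ (1 + A).det := by
  let U := hA.isHermitian.eigenvectorUnitary
  have det_eq_prod : (1 + A).det = ∏ i, (1 + (hA.isHermitian.eigenvalues i : 𝕜)) := by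
    conv_lhs =>
      rw [hA.isHermitian.spectral_theorem, ← map_one (Unitary.conjStarAlgAut 𝕜 _ U), ← map_add,
        Unitary.conjStarAlgAut_apply, det_mul_right_comm, Unitary.mul_star_self_of_mem U.2, one_mul,
        ← diagonal_one, diagonal_add, det_diagonal]
    rfl
  calc (1 : 𝕜) = ∏ _i : n, 1 := Finset.prod_const_one.symm
    _ ≤ ∏ i, (1 + (hA.isHermitian.eigenvalues i : 𝕜)) :=
        Finset.prod_le_prod (fun _ _ ↦ zero_le_one) fun i _ ↦ by
          simpa using hA.eigenvalues_nonneg i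
    _ = (1 + A).det := det_eq_prod.symm

theorem det_le_det_add (hA : A.PosDef) (hB : B.PosSemidef) : A.det ≤ (A + B).det := by
  obtain ⟨U, rfl⟩ := CStarAlgebra.nonneg_iff_eq_star_mul_self.mp hB.nonneg
  rw [star_eq_conjTranspose, det_add_mul _ _ hA.det_pos.ne'.isUnit]
  exact le_mul_of_one_le_right hA.det_pos.le
    (one_le_det_one_add (hA.inv.posSemidef.mul_mul_conjTranspose_same U))

theorem posSemidef_inv_sub_inv_add (hA : A.PosDef) (hC : C.PosSemidef) :
    (A⁻¹ - (A + C)⁻¹).PosSemidef := by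
  have hAC_posDef : (A + C).PosDef := hA.add_posSemidef hC
  have := hA.isUnit.invertible
  have := hAC_posDef.isUnit.invertible
  -- By Schur complements, `[[A, 1], [1, A⁻¹]]` is positive semidefinite, and adding `C` to its
  -- corner keeps it so.
  have hblock_A : (fromBlocks A 1 1ᴴ A⁻¹).PosSemidef := by
    rw [PosDef.fromBlocks₁₁ _ _ hA]
    simpa using PosSemidef.zero
  have hblock_AC : (fromBlocks (A + C) 1 1ᴴ A⁻¹).PosSemidef := by
    have hblock_C : (fromBlocks C 0 0 0 : Matrix (n ⊕ n) (n ⊕ n) 𝕜).PosSemidef := by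
      obtain ⟨V, rfl⟩ := CStarAlgebra.nonneg_iff_eq_star_mul_self.mp hC.nonneg
      have := posSemidef_conjTranspose_mul_self (fromBlocks V 0 0 0 : Matrix (n ⊕ n) (n ⊕ n) 𝕜)
      simpa [fromBlocks_conjTranspose, fromBlocks_multiply, star_eq_conjTranspose] using this
    simpa [fromBlocks_add] using hblock_A.add hblock_C
  simpa using (PosDef.fromBlocks₁₁ _ _ hAC_posDef).mp hblock_AC

theorem det_mul_det_add_add_le (hA : A.PosSemidef) (hB : B.PosSemidef) (hC : C.PosSemidef) :
    A.det * (A + B + C).det ≤ (A + B).det * (A + C).det := by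
  rcases eq_or_ne A.det 0 with hdet | hdet
  · rw [hdet, zero_mul]
    exact mul_nonneg (hA.add hB).det_nonneg (hA.add hC).det_nonneg
  have hA_posDef : A.PosDef := hA.posDef_iff_det_ne_zero.mpr hdet
  have hAB_posDef : (A + B).PosDef := hA_posDef.add_posSemidef hB
  obtain ⟨U, rfl⟩ := CStarAlgebra.nonneg_iff_eq_star_mul_self.mp hC.nonneg
  rw [star_eq_conjTranspose]
  have schur_le : (1 + U * (A + B)⁻¹ * Uᴴ).det ≤ (1 + U * A⁻¹ * Uᴴ).det := by
    have := det_le_det_add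
      (PosDef.one.add_posSemidef (hAB_posDef.inv.posSemidef.mul_mul_conjTranspose_same U))
      ((posSemidef_inv_sub_inv_add hA_posDef hB).mul_mul_conjTranspose_same U)
    rwa [add_assoc, ← Matrix.add_mul, ← Matrix.mul_add, add_sub_cancel] at this
  calc A.det * (A + B + Uᴴ * U).det
      = A.det * (A + B).det * (1 + U * (A + B)⁻¹ * Uᴴ).det := by
        rw [det_add_mul _ _ hAB_posDef.det_pos.ne'.isUnit, ← mul_assoc A.det]
    _ ≤ A.det * (A + B).det * (1 + U * A⁻¹ * Uᴴ).det :=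
        mul_le_mul_of_nonneg_left schur_le (mul_pos hA_posDef.det_pos hAB_posDef.det_pos).le
    _ = (A + B).det * (A + Uᴴ * U).det := by
        rw [det_add_mul _ _ hA_posDef.det_pos.ne'.isUnit]
        ring

theorem det_pow_mul_det_add_sum_le {ι : Type*} {s : Finset ι} (hs : s.Nonempty)
    {B : ι → Matrix n n 𝕜} (hA : A.PosSemidef) (hB : ∀ i ∈ s, (B i).PosSemidef) :
    A.det ^ (s.card - 1) * (A + ∑ i ∈ s, B i).det ≤ ∏ i ∈ s, (A + B i).det := by
  induction hs using Finset.Nonempty.cons_induction with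
  | singleton a => simp
  | cons a s ha hs ih =>
    obtain ⟨hBa, hBs⟩ := (Finset.forall_mem_cons ha _).mp hB
    rw [Finset.card_cons, Finset.sum_cons, Finset.prod_cons, add_tsub_cancel_right]
    calc A.det ^ s.card * (A + (B a + ∑ i ∈ s, B i)).det
        = A.det ^ (s.card - 1) * (A.det * (A + B a + ∑ i ∈ s, B i).det) := by
          rw [← mul_assoc, pow_sub_one_mul hs.card_ne_zero, add_assoc]
      _ ≤ A.det ^ (s.card - 1) * ((A + B a).det * (A + ∑ i ∈ s, B i).det) :=
          mul_le_mul_of_nonneg_left (det_mul_det_add_add_le hA hBa (posSemidef_sum s hBs))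
            (pow_nonneg hA.det_nonneg _)
      _ = (A + B a).det * (A.det ^ (s.card - 1) * (A + ∑ i ∈ s, B i).det) := by ring
      _ ≤ (A + B a).det * ∏ i ∈ s, (A + B i).det :=
          mul_le_mul_of_nonneg_left (ih hBs) (hA.add hBa).det_nonneg

end LogSubmodular

section ColumnGram

variable {m n R : Type*}

/-- The Gram matrix `∑ k ∈ K, z_k z_kᵀ` of the columns `z_k` of `Z` indexed by `K`: its
determinant is the probability that the determinantal process of `Z` is contained in `K`. -/
def columnGram [CommSemiring R] (Z : Matrix m n R) (K : Finset n) : Matrix m m R :=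
  ∑ k ∈ K, vecMulVec (Z.col k) (Z.col k)

theorem columnGram_eq_mul_diagonal_mul [CommSemiring R] [Fintype n] [DecidableEq n]
    (Z : Matrix m n R) (K : Finset n) :
    columnGram Z K = Z * diagonal (fun k ↦ if k ∈ K then 1 else 0 : n → R) * Zᵀ := by
  ext i j
  rw [mul_apply]
  simp [columnGram, Matrix.sum_apply, vecMulVec_apply, mul_diagonal]

theorem columnGram_posSemidef [Finite m] (Z : Matrix m n ℝ) (K : Finset n) :
    (columnGram Z K).PosSemidef :=
  posSemidef_sum K fun k _ ↦ posSemidef_vecMulVec_self_star (Z.col k)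

theorem columnGram_univ [CommSemiring R] [Fintype n] (Z : Matrix m n R) :
    columnGram Z Finset.univ = Z * Zᵀ := by
  ext i j
  simp [columnGram, Matrix.sum_apply, vecMulVec_apply, mul_apply]

theorem columnGram_union [CommSemiring R] [DecidableEq n] (Z : Matrix m n R) {K L : Finset n}
    (hKL : Disjoint K L) : columnGram Z (K ∪ L) = columnGram Z K + columnGram Z L :=
  Finset.sum_union hKL

theorem det_columnGram_pow_mul_le [Fintype m] [DecidableEq m] [DecidableEq n] (Z : Matrix m n ℝ)
    {K s : Finset n} (hKs : Disjoint K s) (hs : s.Nonempty) :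
    (columnGram Z K).det ^ (s.card - 1) * (columnGram Z (K ∪ s)).det
      ≤ ∏ k ∈ s, (columnGram Z (insert k K)).det := by
  have gram_insert (k : n) (hk : k ∈ s) :
      columnGram Z (insert k K) = columnGram Z K + vecMulVec (Z.col k) (Z.col k) := by
    rw [columnGram, Finset.sum_insert (Finset.disjoint_right.mp hKs hk), add_comm, columnGram]
  rw [columnGram_union Z hKs, Finset.prod_congr rfl fun k hk ↦ by rw [gram_insert k hk]]
  exact det_pow_mul_det_add_sum_le hs (columnGram_posSemidef Z K)
    fun k _ ↦ posSemidef_vecMulVec_self_star (Z.col k)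

end ColumnGram

section DeterminantalProcess

variable {q N : ℕ}

theorem detSq_eq_det_gram (Z : Matrix (Fin q) (Fin N) ℝ) {S : Finset (Fin N)} (hS : S.card = q) :
    detSq Z S = ((Zᵀ * Z).submatrix ((↑) : S → Fin N) ((↑) : S → Fin N)).det := by
  let e := (S.orderIsoOfFin hS).toEquiv
  let Z_S : Matrix (Fin q) (Fin q) ℝ := Z.submatrix id fun j ↦ (e j : Fin N)
  calc detSq Z S = Z_S.det ^ 2 := dif_pos hS
    _ = (Z_Sᵀ * Z_S).det := by rw [det_mul, det_transpose, sq]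
    _ = ((Zᵀ * Z).submatrix ((↑) : S → Fin N) ((↑) : S → Fin N)).det :=
        det_submatrix_equiv_self e ((Zᵀ * Z).submatrix ((↑) : S → Fin N) ((↑) : S → Fin N))

theorem det_mul_diagonal_mul_transpose (Z : Matrix (Fin q) (Fin N) ℝ) (w : Fin N → ℝ) :
    (Z * diagonal w * Zᵀ).det = ∑ S, (∏ k ∈ S, w k) * detSq Z S := by
  have minor_eq (S : Finset (Fin N)) (hS : S.card = q) :
      ((diagonal w * Zᵀ * Z).submatrix ((↑) : S → Fin N) ((↑) : S → Fin N)).det =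
        (∏ k ∈ S, w k) * detSq Z S := by
    rw [detSq_eq_det_gram Z hS, ← Finset.prod_coe_sort, ← det_mul_column]
    congr 1
    ext i j
    simp [Matrix.mul_assoc, diagonal_mul]
  rw [Matrix.mul_assoc, det_mul_eq_sum_minors, Fintype.card_fin,
    Finset.sum_congr rfl fun S hS ↦ minor_eq S (Finset.mem_powersetCard_univ.mp hS)]
  refine Finset.sum_subset (Finset.subset_univ _) fun S _ hS ↦ ?_
  rw [detSq, dif_neg (mt Finset.mem_powersetCard_univ.mpr hS), mul_zero]

theorem prDP_subset_eq_det_columnGram (Z : Matrix (Fin q) (Fin N) ℝ) (K : Finset (Fin N)) :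
    prDP Z {S | S ⊆ K} = (columnGram Z K).det := by
  rw [columnGram_eq_mul_diagonal_mul, det_mul_diagonal_mul_transpose]
  refine Finset.sum_congr rfl fun S _ ↦ ?_
  rw [Finset.prod_ite_zero]
  simp [Finset.subset_iff]

end DeterminantalProcess

/-- Without orthonormality of its rows, `Z` has total mass `det (Z Zᵀ)` instead of `1`. -/
theorem avoid_power_le_prod_general {N p n : ℕ} (Z : Matrix (Fin p) (Fin N) ℝ) (hn : n ≠ 0)
    (x : Fin n → Fin N) (hx : Function.Injective x) :
    (Z * Zᵀ).det * (prDP Z {S | ∀ i : Fin n, x i ∉ S}) ^ (n - 1)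
      ≤ ∏ i : Fin n, prDP Z {S | ∀ j : Fin n, j ≠ i → x j ∉ S} := by
  set s : Finset (Fin N) := Finset.univ.image x
  have card_s : s.card = n := by rw [Finset.card_image_of_injective _ hx, Finset.card_fin]
  have avoid_all : {S : Finset (Fin N) | ∀ i, x i ∉ S} = {S | S ⊆ sᶜ} := by
    ext S
    simp only [Set.mem_ofPred_eq, Finset.subset_iff, Finset.mem_compl, s]
    grind
  have avoid_others (i : Fin n) :
      {S : Finset (Fin N) | ∀ j, j ≠ i → x j ∉ S} = {S | S ⊆ insert (x i) sᶜ} := by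
    ext S
    simp only [Set.mem_ofPred_eq, Finset.subset_iff, Finset.mem_insert, Finset.mem_compl, s]
    grind [Function.Injective]
  have key := det_columnGram_pow_mul_le Z disjoint_compl_left
    (Finset.card_ne_zero.mp (card_s.trans_ne hn))
  rw [Finset.union_comm, Finset.union_compl, columnGram_univ, card_s, Finset.prod_image hx.injOn,
    mul_comm] at key
  simpa only [avoid_all, avoid_others, prDP_subset_eq_det_columnGram] using key

/-- for distinct points x₁,…,xₙ (n ≥ 2),
P({x₁,…,xₙ} ⊆ φᶜ)^(n−1) ≤ ∏_{i=1}^{n} P({x_j : j ≠ i} ⊆ φᶜ). -/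
theorem avoid_power_le_prod {N p n : ℕ} (hp : 1 < p) (hpN : p < N)
    (Z : Matrix (Fin p) (Fin N) ℝ) (hZ : Z * Zᵀ = 1)
    (hn : 2 ≤ n) (x : Fin n → Fin N) (hx : Function.Injective x) :
    (prDP Z {S | ∀ i : Fin n, x i ∉ S}) ^ (n - 1)
      ≤ ∏ i : Fin n, prDP Z {S | ∀ j : Fin n, j ≠ i → x j ∉ S} := by
  simpa [hZ] using avoid_power_le_prod_general Z (by lia) x hx
end
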